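/- arXiv:2403.09889 — 2 statements merged into one kernel-verified Lean document; each statement's English description precedes it below -/
import Mathlib

section
/- Let τ and τ₀ be Borel probability measures on ℝ^{d+2} with ∫‖ω‖₂⁴ dτ ≤ T and ∫‖ω‖₂⁴ dτ₀ ≤ T, and let π be a coupling of (τ, τ₀) with (∫‖ω−ω₀‖₂² dπ(ω,ω₀))^{1/2} ≤ W. Let z₁,…,zₙ and z₁⁰,…,zₙ⁰ be points of ℝ^d with ‖zᵢ‖₂ ≤ B, ‖zᵢ⁰‖₂ ≤ B and ‖zᵢ−zᵢ⁰‖₂ ≤ δ for all i ∈ [n]. Define the n×n matrices G and G⁰ by G_{ij} = ∫ ⟨∇_ωh(zᵢ,ω), ∇_ωh(zⱼ,ω)⟩ dτ(ω) and G⁰_{ij} = ∫ ⟨∇_ωh(zᵢ⁰,ω₀), ∇_ωh(zⱼ⁰,ω₀)⟩ dτ₀(ω₀). Then there exists a constant C > 0, depending only on d, C1, B and T, such that |G_{ij} − G⁰_{ij}| ≤ C·(W + δ) for all i, j ∈ [n]. -/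
open MeasureTheory Real Set
open scoped RealInnerProductSpace

noncomputable section

/-- `‖ω‖₂² = a² + ‖w‖₂² + b²` for `ω = (a, w, b) ∈ ℝ × ℝ^d × ℝ ≅ ℝ^{d+2}`. -/
def omegaNormSq (d : ℕ) (ω : ℝ × EuclideanSpace ℝ (Fin d) × ℝ) : ℝ :=
  ω.1 ^ 2 + ‖ω.2.1‖ ^ 2 + ω.2.2 ^ 2

/-- `⟨∇_ωh(z,ω), ∇_ωh(z',ω)⟩` for `ω = (a,w,b)`, where
`∇_ωh(z,ω) = (σ0(⟪w,z⟫+b), a σ0'(⟪w,z⟫+b) z, a σ0'(⟪w,z⟫+b)) ∈ ℝ^{d+2}`. -/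
def gradOmegaInner (d : ℕ) (σ0 : ℝ → ℝ) (z z' : EuclideanSpace ℝ (Fin d))
    (ω : ℝ × EuclideanSpace ℝ (Fin d) × ℝ) : ℝ :=
  σ0 (⟪ω.2.1, z⟫ + ω.2.2) * σ0 (⟪ω.2.1, z'⟫ + ω.2.2) +
    ⟪(ω.1 * deriv σ0 (⟪ω.2.1, z⟫ + ω.2.2)) • z, (ω.1 * deriv σ0 (⟪ω.2.1, z'⟫ + ω.2.2)) • z'⟫ +
    (ω.1 * deriv σ0 (⟪ω.2.1, z⟫ + ω.2.2)) * (ω.1 * deriv σ0 (⟪ω.2.1, z'⟫ + ω.2.2))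

/-!
Write the bias as an extra coordinate: with `x = (z, 1)` and `v = (w, b)`, the neuron is
`a * σ ⟪v, x⟫`, with gradient `(σ ⟪v, x⟫, a * σ' ⟪v, x⟫ • x)`. If `M ≥ 1` bounds the norms of two
parameters `p`, `p₀` at distance `D`, this gradient is `O(M)`, and it moves by `O(M * (D + M * δ))`
when `p` moves to `p₀` and `x` moves by `δ`. Hence the integrands of the two Gram entries differ by
`O(M ^ 2 * (D + M * δ))` along the coupling. Cauchy–Schwarz bounds the integral of `M ^ 2 * D`, and
`M ^ 3 ≤ M ^ 4` bounds the rest, so fourth moments suffice. With `M = max 1 (max ‖p‖ ‖p₀‖)`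
one has `M ^ 4 ≤ 1 + ‖p‖ ^ 4 + ‖p₀‖ ^ 4`. The constant does not depend on the dimension.
-/

section Norms

variable {E F : Type*} [NormedAddCommGroup E]

lemma norm_toLp_prod_le [NormedAddCommGroup F] (p : ENNReal) [Fact (1 ≤ p)] (x : E) (y : F) :
    ‖WithLp.toLp p (x, y)‖ ≤ ‖x‖ + ‖y‖ := by
  have hsplit : WithLp.toLp p (x, y) = WithLp.toLp p (x, 0) + WithLp.toLp p (0, y) := by
    rw [← WithLp.toLp_add, Prod.mk_add_mk, add_zero, zero_add]
  calc ‖WithLp.toLp p (x, y)‖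
      ≤ ‖WithLp.toLp p (x, (0 : F))‖ + ‖WithLp.toLp p ((0 : E), y)‖ := hsplit ▸ norm_add_le _ _
    _ = ‖x‖ + ‖y‖ := by rw [WithLp.norm_toLp_fst, WithLp.norm_toLp_snd]

lemma abs_inner_sub_inner_le [InnerProductSpace ℝ E] (u u₀ v v₀ : E) :
    |⟪u, v⟫ - ⟪u₀, v₀⟫| ≤ ‖u - u₀‖ * ‖v‖ + ‖u₀‖ * ‖v - v₀‖ := by
  have hsplit : ⟪u, v⟫ - ⟪u₀, v₀⟫ = ⟪u - u₀, v⟫ + ⟪u₀, v - v₀⟫ := by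
    rw [inner_sub_left, inner_sub_right]; ring
  rw [hsplit]
  exact (abs_add_le _ _).trans
    (add_le_add (abs_real_inner_le_norm _ _) (abs_real_inner_le_norm _ _))

lemma norm_smul_sub_smul_le [NormedSpace ℝ E] (c c₀ : ℝ) (x x₀ : E) :
    ‖c • x - c₀ • x₀‖ ≤ |c - c₀| * ‖x‖ + |c₀| * ‖x - x₀‖ := by
  have hsplit : c • x - c₀ • x₀ = (c - c₀) • x + c₀ • (x - x₀) := by
    rw [sub_smul, smul_sub]; abel
  rw [hsplit, ← Real.norm_eq_abs, ← Real.norm_eq_abs, ← norm_smul, ← norm_smul]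
  exact norm_add_le _ _

end Norms

section Integrals

variable {Ω : Type*} {mΩ : MeasurableSpace Ω} {μ : Measure Ω}

lemma integrable_inner_of_memLp_two {E : Type*} [NormedAddCommGroup E] [InnerProductSpace ℝ E]
    {f g : Ω → E} (hf : MemLp f 2 μ) (hg : MemLp g 2 μ) : Integrable (fun ω => ⟪f ω, g ω⟫) μ :=
  (hf.norm.integrable_mul hg.norm).mono' (hf.1.inner hg.1) (.of_forall fun _ =>
    norm_inner_le_norm _ _)

lemma integral_mul_le_sqrt_mul_sqrt {f g : Ω → ℝ} (hf₀ : 0 ≤ᵐ[μ] f) (hg₀ : 0 ≤ᵐ[μ] g)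
    (hf : MemLp f 2 μ) (hg : MemLp g 2 μ) :
    ∫ ω, f ω * g ω ∂μ ≤ √(∫ ω, f ω ^ 2 ∂μ) * √(∫ ω, g ω ^ 2 ∂μ) := by
  have holder := integral_mul_le_Lp_mul_Lq_of_nonneg Real.HolderConjugate.two_two hf₀ hg₀
    (by simpa using hf) (by simpa using hg)
  simpa only [Real.rpow_two, ← Real.sqrt_eq_rpow] using holder

lemma memLp_natCast_of_integrable_norm_pow {E : Type*} [NormedAddCommGroup E] {f : Ω → E} {n : ℕ}
    (hn : n ≠ 0) (hf : AEStronglyMeasurable f μ) (hint : Integrable (fun ω => ‖f ω‖ ^ n) μ) :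
    MemLp f n μ := by
  refine (integrable_norm_rpow_iff hf (by simpa using hn) (by simp)).1 ?_
  simpa only [ENNReal.toReal_natCast, Real.rpow_natCast] using hint

lemma memLp_two_sq_of_memLp_four {f : Ω → ℝ} (hf : MemLp f 4 μ) :
    MemLp (fun ω => f ω ^ 2) 2 μ := by
  refine (memLp_two_iff_integrable_sq (hf.1.pow 2)).2 ?_
  have hpow : Integrable (fun ω => ‖f ω‖ ^ 4) μ := hf.integrable_norm_pow (by norm_num)
  exact hpow.congr (.of_forall fun ω => by simp only [Pi.pow_apply, Real.norm_eq_abs,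
    Even.pow_abs ⟨2, rfl⟩, ← pow_mul])

variable [IsProbabilityMeasure μ] {M D : Ω → ℝ}

lemma integrable_sq_mul_add_mul (hM : MemLp M 4 μ) (hD : MemLp D 2 μ) (δ : ℝ) :
    Integrable (fun ω => M ω ^ 2 * (D ω + M ω * δ)) μ :=
  (memLp_two_sq_of_memLp_four hM).integrable_mul
    (hD.add ((hM.mono_exponent (by norm_num)).mul_const δ))

lemma integral_sq_mul_add_mul_le {Q W δ : ℝ} (hM : MemLp M 4 μ) (hD : MemLp D 2 μ)
    (hM₁ : ∀ ω, 1 ≤ M ω) (hD₀ : ∀ ω, 0 ≤ D ω) (hδ : 0 ≤ δ)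
    (hQ : ∫ ω, M ω ^ 4 ∂μ ≤ Q) (hW : √(∫ ω, D ω ^ 2 ∂μ) ≤ W) :
    ∫ ω, M ω ^ 2 * (D ω + M ω * δ) ∂μ ≤ Q * (W + δ) := by
  have hMsq := memLp_two_sq_of_memLp_four hM
  have hM4 : Integrable (fun ω => M ω ^ 4) μ := by
    simpa only [← pow_mul] using hMsq.integrable_sq
  have hMD : Integrable (fun ω => M ω ^ 2 * D ω) μ := hMsq.integrable_mul hD
  have hW₀ : 0 ≤ W := (Real.sqrt_nonneg _).trans hW
  have hQ₁ : 1 ≤ Q := by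
    refine le_trans ?_ hQ
    simpa using integral_mono (integrable_const 1) hM4 fun ω => one_le_pow₀ (hM₁ ω)
  have hcauchySchwarz : ∫ ω, M ω ^ 2 * D ω ∂μ ≤ Q * W :=
    calc ∫ ω, M ω ^ 2 * D ω ∂μ
        ≤ √(∫ ω, (M ω ^ 2) ^ 2 ∂μ) * √(∫ ω, D ω ^ 2 ∂μ) :=
          integral_mul_le_sqrt_mul_sqrt (.of_forall fun ω => sq_nonneg _) (.of_forall hD₀) hMsq hD
      _ ≤ √Q * W := by
          simp only [← pow_mul]
          gcongr
      _ ≤ Q * W := by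
          gcongr
          exact Real.sqrt_le_iff.2 ⟨by positivity, le_self_pow₀ hQ₁ two_ne_zero⟩
  calc ∫ ω, M ω ^ 2 * (D ω + M ω * δ) ∂μ
      ≤ ∫ ω, (M ω ^ 2 * D ω + M ω ^ 4 * δ) ∂μ := by
        refine integral_mono (integrable_sq_mul_add_mul hM hD δ) (hMD.add (hM4.mul_const δ))
          fun ω => ?_
        have hcube : M ω ^ 3 ≤ M ω ^ 4 := pow_le_pow_right₀ (hM₁ ω) (by norm_num)
        calc M ω ^ 2 * (D ω + M ω * δ) = M ω ^ 2 * D ω + M ω ^ 3 * δ := by ring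
          _ ≤ M ω ^ 2 * D ω + M ω ^ 4 * δ := by gcongr
    _ = (∫ ω, M ω ^ 2 * D ω ∂μ) + (∫ ω, M ω ^ 4 ∂μ) * δ := by
        rw [integral_add hMD (hM4.mul_const δ), integral_mul_const]
    _ ≤ Q * W + Q * δ := by gcongr
    _ = Q * (W + δ) := by ring

end Integrals

section Activation

/-- The regularity of an activation function with constant `L`: at most linear growth, bounded
derivative and Lipschitz derivative. A `C²` function with first and second derivatives bounded
by `L` meets the last two conditions. -/
structure ActivationBounds (L : ℝ) (σ : ℝ → ℝ) : Prop where
  differentiable : Differentiable ℝ σ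
  abs_le : ∀ s, |σ s| ≤ L * max |s| 1
  abs_deriv_le : ∀ s, |deriv σ s| ≤ L
  abs_deriv_sub_le : ∀ s t, |deriv σ s - deriv σ t| ≤ L * |s - t|

lemma abs_sub_le_of_abs_deriv_le {f : ℝ → ℝ} {L : ℝ} (hf : Differentiable ℝ f)
    (hL : ∀ s, |deriv f s| ≤ L) (s t : ℝ) : |f s - f t| ≤ L * |s - t| :=
  convex_univ.norm_image_sub_le_of_norm_deriv_le (fun x _ => hf x) (fun x _ => hL x)
    (mem_univ t) (mem_univ s)

namespace ActivationBounds

variable {L : ℝ} {σ : ℝ → ℝ}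

lemma of_contDiff_two (hσ : ContDiff ℝ 2 σ) (h₀ : ∀ s, |σ s| ≤ L * max |s| 1)
    (h₁ : ∀ s, |deriv σ s| ≤ L) (h₂ : ∀ s, |deriv (deriv σ) s| ≤ L) : ActivationBounds L σ where
  differentiable := hσ.differentiable two_ne_zero
  abs_le := h₀
  abs_deriv_le := h₁
  abs_deriv_sub_le := abs_sub_le_of_abs_deriv_le
    ((contDiff_succ_iff_deriv (n := 1)).1 hσ).2.2.differentiable_one h₂

lemma nonneg (hσ : ActivationBounds L σ) : 0 ≤ L :=
  (abs_nonneg _).trans (hσ.abs_deriv_le 0)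

lemma abs_sub_le (hσ : ActivationBounds L σ) (s t : ℝ) : |σ s - σ t| ≤ L * |s - t| :=
  abs_sub_le_of_abs_deriv_le hσ.differentiable hσ.abs_deriv_le s t

lemma continuous_deriv (hσ : ActivationBounds L σ) : Continuous (deriv σ) :=
  (LipschitzWith.of_dist_le_mul (K := ⟨L, hσ.nonneg⟩) hσ.abs_deriv_sub_le).continuous

end ActivationBounds

end Activation

section Neuron

variable {F : Type*} [NormedAddCommGroup F] [InnerProductSpace ℝ F]

/-- The gradient in `p = (a, v)` of the neuron `a * σ ⟪v, x⟫`. There is no bias term: a neuron with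
bias is recovered by appending a coordinate `1` to `x`, see `withBias`. -/
def neuronGrad (σ : ℝ → ℝ) (x : F) (p : WithLp 2 (ℝ × F)) : WithLp 2 (ℝ × F) :=
  WithLp.toLp 2 (σ ⟪p.snd, x⟫, (p.fst * deriv σ ⟪p.snd, x⟫) • x)

variable {L b M δ : ℝ} {σ : ℝ → ℝ} {x x₀ y y₀ : F} {p p₀ : WithLp 2 (ℝ × F)}

lemma continuous_neuronGrad (hσ : ActivationBounds L σ) (x : F) :
    Continuous (neuronGrad σ x) := by
  have hcont := hσ.differentiable.continuous
  have hcont' := hσ.continuous_deriv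
  unfold neuronGrad
  fun_prop

lemma continuous_inner_neuronGrad (hσ : ActivationBounds L σ) (x y : F) :
    Continuous fun p => ⟪neuronGrad σ x p, neuronGrad σ y p⟫ :=
  (continuous_neuronGrad hσ x).inner (continuous_neuronGrad hσ y)

lemma norm_neuronGrad_le (hσ : ActivationBounds L σ) (hb : 1 ≤ b) (hx : ‖x‖ ≤ b) (hM : 1 ≤ M)
    (hp : ‖p‖ ≤ M) : ‖neuronGrad σ x p‖ ≤ 2 * L * b * M := by
  have hL := hσ.nonneg
  have hpre : max |⟪p.snd, x⟫| 1 ≤ b * M :=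
    max_le
      (calc |⟪p.snd, x⟫| ≤ ‖p.snd‖ * ‖x‖ := abs_real_inner_le_norm _ _
        _ ≤ M * b := by gcongr; exact (WithLp.norm_snd_le _ p).trans hp
        _ = b * M := mul_comm _ _)
      (one_le_mul_of_one_le_of_one_le hb hM)
  have hvalue : ‖σ ⟪p.snd, x⟫‖ ≤ L * (b * M) := (hσ.abs_le _).trans (by gcongr)
  have hslope : ‖(p.fst * deriv σ ⟪p.snd, x⟫) • x‖ ≤ M * L * b := by
    rw [norm_smul, norm_mul]
    gcongr
    exacts [(WithLp.norm_fst_le _ p).trans hp, hσ.abs_deriv_le _]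
  calc ‖neuronGrad σ x p‖
      ≤ ‖σ ⟪p.snd, x⟫‖ + ‖(p.fst * deriv σ ⟪p.snd, x⟫) • x‖ := norm_toLp_prod_le _ _ _
    _ ≤ L * (b * M) + M * L * b := add_le_add hvalue hslope
    _ = 2 * L * b * M := by ring

lemma abs_preactivation_sub_le (hb : 1 ≤ b) (hx : ‖x‖ ≤ b) (hp₀ : ‖p₀‖ ≤ M)
    (hxx₀ : ‖x - x₀‖ ≤ δ) :
    |⟪p.snd, x⟫ - ⟪p₀.snd, x₀⟫| ≤ b * (‖p - p₀‖ + M * δ) := by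
  have hM : 0 ≤ M := (norm_nonneg _).trans hp₀
  have hδ : 0 ≤ δ := (norm_nonneg _).trans hxx₀
  have hsnd : ‖p.snd - p₀.snd‖ ≤ ‖p - p₀‖ := WithLp.norm_snd_le _ (p - p₀)
  have hsnd₀ : ‖p₀.snd‖ ≤ M := (WithLp.norm_snd_le _ p₀).trans hp₀
  calc |⟪p.snd, x⟫ - ⟪p₀.snd, x₀⟫|
      ≤ ‖p.snd - p₀.snd‖ * ‖x‖ + ‖p₀.snd‖ * ‖x - x₀‖ := abs_inner_sub_inner_le _ _ _ _
    _ ≤ ‖p - p₀‖ * b + M * δ := by gcongr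
    _ ≤ ‖p - p₀‖ * b + b * (M * δ) :=
        add_le_add_right (le_mul_of_one_le_left (by positivity) hb) _
    _ = b * (‖p - p₀‖ + M * δ) := by ring

lemma abs_slope_sub_le (hσ : ActivationBounds L σ) (hb : 1 ≤ b) (hx : ‖x‖ ≤ b)
    (hp₀ : ‖p₀‖ ≤ M) (hxx₀ : ‖x - x₀‖ ≤ δ) :
    |p.fst * deriv σ ⟪p.snd, x⟫ - p₀.fst * deriv σ ⟪p₀.snd, x₀⟫| ≤
      L * ‖p - p₀‖ + L * b * M * (‖p - p₀‖ + M * δ) := by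
  have hL := hσ.nonneg
  have hM : 0 ≤ M := (norm_nonneg _).trans hp₀
  have hfst : |p.fst - p₀.fst| ≤ ‖p - p₀‖ := WithLp.norm_fst_le _ (p - p₀)
  have hfst₀ : |p₀.fst| ≤ M := (WithLp.norm_fst_le _ p₀).trans hp₀
  have hderiv : |deriv σ ⟪p.snd, x⟫ - deriv σ ⟪p₀.snd, x₀⟫| ≤ L * (b * (‖p - p₀‖ + M * δ)) :=
    (hσ.abs_deriv_sub_le _ _).trans (by gcongr; exact abs_preactivation_sub_le hb hx hp₀ hxx₀)
  calc |p.fst * deriv σ ⟪p.snd, x⟫ - p₀.fst * deriv σ ⟪p₀.snd, x₀⟫|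
      ≤ |p.fst - p₀.fst| * |deriv σ ⟪p.snd, x⟫| +
          |p₀.fst| * |deriv σ ⟪p.snd, x⟫ - deriv σ ⟪p₀.snd, x₀⟫| := by
        simpa only [smul_eq_mul, Real.norm_eq_abs] using
          norm_smul_sub_smul_le p.fst p₀.fst (deriv σ ⟪p.snd, x⟫) (deriv σ ⟪p₀.snd, x₀⟫)
    _ ≤ ‖p - p₀‖ * L + M * (L * (b * (‖p - p₀‖ + M * δ))) := by
      gcongr; exact hσ.abs_deriv_le _
    _ = L * ‖p - p₀‖ + L * b * M * (‖p - p₀‖ + M * δ) := by ring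

lemma norm_neuronGrad_sub_le (hσ : ActivationBounds L σ) (hb : 1 ≤ b) (hx : ‖x‖ ≤ b)
    (hM : 1 ≤ M) (hp₀ : ‖p₀‖ ≤ M) (hxx₀ : ‖x - x₀‖ ≤ δ) :
    ‖neuronGrad σ x p - neuronGrad σ x₀ p₀‖ ≤ 3 * L * b ^ 2 * M * (‖p - p₀‖ + M * δ) := by
  have hL := hσ.nonneg
  have hδ : 0 ≤ δ := (norm_nonneg _).trans hxx₀
  have hslope₀ : |p₀.fst * deriv σ ⟪p₀.snd, x₀⟫| ≤ M * L := by
    rw [abs_mul]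
    gcongr
    exacts [(WithLp.norm_fst_le _ p₀).trans hp₀, hσ.abs_deriv_le _]
  have hvalue : ‖σ ⟪p.snd, x⟫ - σ ⟪p₀.snd, x₀⟫‖ ≤ L * (b * (‖p - p₀‖ + M * δ)) :=
    (hσ.abs_sub_le _ _).trans (by gcongr; exact abs_preactivation_sub_le hb hx hp₀ hxx₀)
  have hslope : ‖(p.fst * deriv σ ⟪p.snd, x⟫) • x - (p₀.fst * deriv σ ⟪p₀.snd, x₀⟫) • x₀‖ ≤
      (L * ‖p - p₀‖ + L * b * M * (‖p - p₀‖ + M * δ)) * b + M * L * δ :=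
    (norm_smul_sub_smul_le _ _ _ _).trans
      (by gcongr; exact abs_slope_sub_le hσ hb hx hp₀ hxx₀)
  have hb_le : b ≤ b ^ 2 * M := by nlinarith
  have hone_le : 1 ≤ b ^ 2 * M := by nlinarith
  calc ‖neuronGrad σ x p - neuronGrad σ x₀ p₀‖
      ≤ ‖σ ⟪p.snd, x⟫ - σ ⟪p₀.snd, x₀⟫‖ +
          ‖(p.fst * deriv σ ⟪p.snd, x⟫) • x - (p₀.fst * deriv σ ⟪p₀.snd, x₀⟫) • x₀‖ :=
        norm_toLp_prod_le _ _ _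
    _ ≤ L * (b * (‖p - p₀‖ + M * δ)) +
          ((L * ‖p - p₀‖ + L * b * M * (‖p - p₀‖ + M * δ)) * b + M * L * δ) :=
        add_le_add hvalue hslope
    _ = L * (‖p - p₀‖ + M * δ) * (b + b ^ 2 * M) + L * ‖p - p₀‖ * b + L * (M * δ) * 1 := by ring
    _ ≤ L * (‖p - p₀‖ + M * δ) * (b ^ 2 * M + b ^ 2 * M) + L * ‖p - p₀‖ * (b ^ 2 * M) +
          L * (M * δ) * (b ^ 2 * M) := by gcongr
    _ = 3 * L * b ^ 2 * M * (‖p - p₀‖ + M * δ) := by ring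

lemma abs_inner_neuronGrad_sub_le (hσ : ActivationBounds L σ) (hb : 1 ≤ b) (hM : 1 ≤ M)
    (hx : ‖x‖ ≤ b) (hx₀ : ‖x₀‖ ≤ b) (hxx₀ : ‖x - x₀‖ ≤ δ)
    (hy : ‖y‖ ≤ b) (hyy₀ : ‖y - y₀‖ ≤ δ) (hp : ‖p‖ ≤ M) (hp₀ : ‖p₀‖ ≤ M) :
    |⟪neuronGrad σ x p, neuronGrad σ y p⟫ - ⟪neuronGrad σ x₀ p₀, neuronGrad σ y₀ p₀⟫| ≤
      12 * L ^ 2 * b ^ 3 * (M ^ 2 * (‖p - p₀‖ + M * δ)) := by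
  have hL := hσ.nonneg
  have hδ : 0 ≤ δ := (norm_nonneg _).trans hxx₀
  calc |⟪neuronGrad σ x p, neuronGrad σ y p⟫ - ⟪neuronGrad σ x₀ p₀, neuronGrad σ y₀ p₀⟫|
      ≤ ‖neuronGrad σ x p - neuronGrad σ x₀ p₀‖ * ‖neuronGrad σ y p‖ +
          ‖neuronGrad σ x₀ p₀‖ * ‖neuronGrad σ y p - neuronGrad σ y₀ p₀‖ :=
        abs_inner_sub_inner_le _ _ _ _
    _ ≤ 3 * L * b ^ 2 * M * (‖p - p₀‖ + M * δ) * (2 * L * b * M) +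
          2 * L * b * M * (3 * L * b ^ 2 * M * (‖p - p₀‖ + M * δ)) := by
        gcongr
        exacts [norm_neuronGrad_sub_le hσ hb hx hM hp₀ hxx₀, norm_neuronGrad_le hσ hb hy hM hp,
          norm_neuronGrad_le hσ hb hx₀ hM hp₀, norm_neuronGrad_sub_le hσ hb hy hM hp₀ hyy₀]
    _ = 12 * L ^ 2 * b ^ 3 * (M ^ 2 * (‖p - p₀‖ + M * δ)) := by ring

end Neuron

section GramEntry

lemma max_one_max_pow_four_le (r s : ℝ) : max 1 (max r s) ^ 4 ≤ 1 + r ^ 4 + s ^ 4 := by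
  have hr : 0 ≤ r ^ 4 := by positivity
  have hs : 0 ≤ s ^ 4 := by positivity
  rcases max_choice 1 (max r s) with h | h
  · rw [h]; linarith
  · rcases max_choice r s with h' | h' <;> rw [h, h'] <;> linarith

variable {F Ω : Type*} [NormedAddCommGroup F] [InnerProductSpace ℝ F] {mΩ : MeasurableSpace Ω}
  {μ : Measure Ω} [IsProbabilityMeasure μ] {L b T W δ : ℝ} {σ : ℝ → ℝ} {x x₀ y y₀ : F}

lemma memLp_two_neuronGrad (hσ : ActivationBounds L σ) (x : F) {X : Ω → WithLp 2 (ℝ × F)}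
    (hX : MemLp X 2 μ) : MemLp (fun ω => neuronGrad σ x (X ω)) 2 μ := by
  have hmax : MemLp (fun ω => max 1 ‖X ω‖) 2 μ := (memLp_const 1).sup hX.norm
  refine hmax.of_le_mul ((continuous_neuronGrad hσ x).comp_aestronglyMeasurable hX.1)
    (.of_forall fun ω => ?_) (c := 2 * L * max 1 ‖x‖)
  rw [Real.norm_of_nonneg (by positivity)]
  exact norm_neuronGrad_le hσ (le_max_left _ _) (le_max_right _ _) (le_max_left _ _)
    (le_max_right _ _)

lemma integral_max_one_max_norm_pow_four_le {G : Type*} [NormedAddCommGroup G] {X X₀ : Ω → G}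
    (hX : MemLp X 4 μ) (hX₀ : MemLp X₀ 4 μ) (hXT : ∫ ω, ‖X ω‖ ^ 4 ∂μ ≤ T)
    (hX₀T : ∫ ω, ‖X₀ ω‖ ^ 4 ∂μ ≤ T) :
    ∫ ω, max 1 (max ‖X ω‖ ‖X₀ ω‖) ^ 4 ∂μ ≤ 1 + 2 * T := by
  have hint : Integrable (fun ω => ‖X ω‖ ^ 4) μ := hX.integrable_norm_pow (by norm_num)
  have hint₀ : Integrable (fun ω => ‖X₀ ω‖ ^ 4) μ := hX₀.integrable_norm_pow (by norm_num)
  have hint₁ : Integrable (fun ω => 1 + ‖X ω‖ ^ 4) μ := (integrable_const 1).add hint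
  calc ∫ ω, max 1 (max ‖X ω‖ ‖X₀ ω‖) ^ 4 ∂μ
      ≤ ∫ ω, (1 + ‖X ω‖ ^ 4 + ‖X₀ ω‖ ^ 4) ∂μ :=
        integral_mono_of_nonneg (.of_forall fun ω => by positivity) (hint₁.add hint₀)
          (.of_forall fun ω => max_one_max_pow_four_le _ _)
    _ = 1 + (∫ ω, ‖X ω‖ ^ 4 ∂μ) + ∫ ω, ‖X₀ ω‖ ^ 4 ∂μ := by
        rw [integral_add hint₁ hint₀, integral_add (integrable_const 1) hint, integral_const,
          probReal_univ, one_smul]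
    _ ≤ 1 + 2 * T := by linarith

lemma abs_integral_inner_neuronGrad_sub_le (hσ : ActivationBounds L σ) (hb : 1 ≤ b)
    {X X₀ : Ω → WithLp 2 (ℝ × F)} (hX : MemLp X 4 μ) (hX₀ : MemLp X₀ 4 μ)
    (hXT : ∫ ω, ‖X ω‖ ^ 4 ∂μ ≤ T) (hX₀T : ∫ ω, ‖X₀ ω‖ ^ 4 ∂μ ≤ T)
    (hW : √(∫ ω, ‖X ω - X₀ ω‖ ^ 2 ∂μ) ≤ W)
    (hx : ‖x‖ ≤ b) (hx₀ : ‖x₀‖ ≤ b) (hxx₀ : ‖x - x₀‖ ≤ δ) (hy : ‖y‖ ≤ b) (hyy₀ : ‖y - y₀‖ ≤ δ) :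
    |(∫ ω, ⟪neuronGrad σ x (X ω), neuronGrad σ y (X ω)⟫ ∂μ) -
        ∫ ω, ⟪neuronGrad σ x₀ (X₀ ω), neuronGrad σ y₀ (X₀ ω)⟫ ∂μ| ≤
      12 * L ^ 2 * b ^ 3 * (1 + 2 * T) * (W + δ) := by
  have hδ : 0 ≤ δ := (norm_nonneg _).trans hxx₀
  have hgram (u v : F) {Y : Ω → WithLp 2 (ℝ × F)} (hY : MemLp Y 4 μ) :
      Integrable (fun ω => ⟪neuronGrad σ u (Y ω), neuronGrad σ v (Y ω)⟫) μ :=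
    have hY₂ : MemLp Y 2 μ := hY.mono_exponent (by norm_num)
    integrable_inner_of_memLp_two (memLp_two_neuronGrad hσ u hY₂) (memLp_two_neuronGrad hσ v hY₂)
  set M : Ω → ℝ := fun ω => max 1 (max ‖X ω‖ ‖X₀ ω‖) with hMdef
  have hM : MemLp M 4 μ := (memLp_const 1).sup (hX.norm.sup hX₀.norm)
  have hM₁ (ω : Ω) : 1 ≤ M ω := le_max_left _ _
  have hD : MemLp (fun ω => ‖X ω - X₀ ω‖) 2 μ := ((hX.sub hX₀).mono_exponent (by norm_num)).norm
  have hpointwise (ω : Ω) :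
      |⟪neuronGrad σ x (X ω), neuronGrad σ y (X ω)⟫ -
        ⟪neuronGrad σ x₀ (X₀ ω), neuronGrad σ y₀ (X₀ ω)⟫| ≤
      12 * L ^ 2 * b ^ 3 * (M ω ^ 2 * (‖X ω - X₀ ω‖ + M ω * δ)) :=
    abs_inner_neuronGrad_sub_le hσ hb (hM₁ ω) hx hx₀ hxx₀ hy hyy₀ (by simp [hMdef])
      (by simp [hMdef])
  rw [← integral_sub (hgram x y hX) (hgram x₀ y₀ hX₀)]
  calc |∫ ω, (⟪neuronGrad σ x (X ω), neuronGrad σ y (X ω)⟫ -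
          ⟪neuronGrad σ x₀ (X₀ ω), neuronGrad σ y₀ (X₀ ω)⟫) ∂μ|
      ≤ ∫ ω, 12 * L ^ 2 * b ^ 3 * (M ω ^ 2 * (‖X ω - X₀ ω‖ + M ω * δ)) ∂μ :=
        (Real.norm_eq_abs _).symm.trans_le (norm_integral_le_of_norm_le
          ((integrable_sq_mul_add_mul hM hD δ).const_mul _) (.of_forall hpointwise))
    _ = 12 * L ^ 2 * b ^ 3 * ∫ ω, M ω ^ 2 * (‖X ω - X₀ ω‖ + M ω * δ) ∂μ := integral_const_mul _ _
    _ ≤ 12 * L ^ 2 * b ^ 3 * ((1 + 2 * T) * (W + δ)) := by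
        gcongr
        exact integral_sq_mul_add_mul_le hM hD hM₁ (fun ω => norm_nonneg _) hδ
          (integral_max_one_max_norm_pow_four_le hX hX₀ hXT hX₀T) hW
    _ = 12 * L ^ 2 * b ^ 3 * (1 + 2 * T) * (W + δ) := by ring

end GramEntry

section Bias

variable {E : Type*} [NormedAddCommGroup E]

/-- The input `z` with a coordinate `1` appended, which turns the bias into an ordinary weight. -/
def withBias (z : E) : WithLp 2 (E × ℝ) :=
  WithLp.toLp 2 (z, 1)

/-- The parameter `(a, w, b)` as the output weight `a` together with the weight `(w, b)` of
`withBias z`, in the `ℓ²` product instead of the `Prod` type, whose norm is the supremum. -/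
def toParam (ω : ℝ × E × ℝ) : WithLp 2 (ℝ × WithLp 2 (E × ℝ)) :=
  WithLp.toLp 2 (ω.1, WithLp.toLp 2 ω.2)

lemma continuous_toParam : Continuous (toParam (E := E)) := by
  unfold toParam
  fun_prop

lemma norm_withBias_le (z : E) : ‖withBias z‖ ≤ 1 + ‖z‖ := by
  simpa [withBias, add_comm] using norm_toLp_prod_le 2 z (1 : ℝ)

lemma norm_withBias_sub (z z₀ : E) : ‖withBias z - withBias z₀‖ = ‖z - z₀‖ := by
  rw [withBias, withBias, ← WithLp.toLp_sub, Prod.mk_sub_mk, sub_self, WithLp.norm_toLp_fst]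

lemma norm_toParam_sq (ω : ℝ × E × ℝ) :
    ‖toParam ω‖ ^ 2 = ω.1 ^ 2 + ‖ω.2.1‖ ^ 2 + ω.2.2 ^ 2 := by
  simp [toParam, WithLp.prod_norm_sq_eq_of_L2, add_assoc]

lemma toParam_sub (ω ω₀ : ℝ × E × ℝ) : toParam (ω - ω₀) = toParam ω - toParam ω₀ := rfl

variable [InnerProductSpace ℝ E] [MeasurableSpace E] [OpensMeasurableSpace E]
  [SecondCountableTopology E]

theorem statement14_general {L B T W δ : ℝ} {σ : ℝ → ℝ} (hσ : ActivationBounds L σ)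
    {τ τ₀ : Measure (ℝ × E × ℝ)} [IsProbabilityMeasure τ]
    (hτ : Integrable (fun ω => ‖toParam ω‖ ^ 4) τ) (hτT : ∫ ω, ‖toParam ω‖ ^ 4 ∂τ ≤ T)
    (hτ₀ : Integrable (fun ω => ‖toParam ω‖ ^ 4) τ₀) (hτ₀T : ∫ ω, ‖toParam ω‖ ^ 4 ∂τ₀ ≤ T)
    {Pi : Measure ((ℝ × E × ℝ) × (ℝ × E × ℝ))}
    (hfst : Pi.map Prod.fst = τ) (hsnd : Pi.map Prod.snd = τ₀)
    (hW : √(∫ q, ‖toParam (q.1 - q.2)‖ ^ 2 ∂Pi) ≤ W) {z z₀ z' z₀' : E}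
    (hz : ‖z‖ ≤ B) (hz₀ : ‖z₀‖ ≤ B) (hzz₀ : ‖z - z₀‖ ≤ δ)
    (hz' : ‖z'‖ ≤ B) (hzz₀' : ‖z' - z₀'‖ ≤ δ) :
    |(∫ ω, ⟪neuronGrad σ (withBias z) (toParam ω), neuronGrad σ (withBias z') (toParam ω)⟫ ∂τ) -
        ∫ ω, ⟪neuronGrad σ (withBias z₀) (toParam ω),
          neuronGrad σ (withBias z₀') (toParam ω)⟫ ∂τ₀| ≤
      12 * L ^ 2 * (1 + B) ^ 3 * (1 + 2 * T) * (W + δ) := by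
  subst hfst hsnd
  have : IsProbabilityMeasure Pi := Measure.isProbabilityMeasure_of_map Prod.fst
  have hgram (u v : E) : Continuous fun ω : ℝ × E × ℝ =>
      ⟪neuronGrad σ (withBias u) (toParam ω), neuronGrad σ (withBias v) (toParam ω)⟫ :=
    (continuous_inner_neuronGrad hσ _ _).comp continuous_toParam
  have hX : MemLp (fun q => toParam q.1) 4 Pi := memLp_natCast_of_integrable_norm_pow four_ne_zero
    (continuous_toParam.comp continuous_fst).aestronglyMeasurable
    (hτ.comp_measurable measurable_fst)
  have hX₀ : MemLp (fun q => toParam q.2) 4 Pi := memLp_natCast_of_integrable_norm_pow four_ne_zero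
    (continuous_toParam.comp continuous_snd).aestronglyMeasurable
    (hτ₀.comp_measurable measurable_snd)
  rw [integral_map measurable_fst.aemeasurable hτ.1] at hτT
  rw [integral_map measurable_snd.aemeasurable hτ₀.1] at hτ₀T
  rw [integral_map measurable_fst.aemeasurable (hgram _ _).aestronglyMeasurable,
    integral_map measurable_snd.aemeasurable (hgram _ _).aestronglyMeasurable]
  simp only [toParam_sub] at hW
  have hB : 0 ≤ B := (norm_nonneg z).trans hz
  have hbias {u : E} (hu : ‖u‖ ≤ B) : ‖withBias u‖ ≤ 1 + B :=
    (norm_withBias_le u).trans (by gcongr)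
  exact abs_integral_inner_neuronGrad_sub_le hσ (le_add_of_nonneg_right hB) hX hX₀ hτT hτ₀T hW
    (hbias hz) (hbias hz₀) ((norm_withBias_sub z z₀).trans_le hzz₀) (hbias hz')
    ((norm_withBias_sub z' z₀').trans_le hzz₀')

end Bias

lemma omegaNormSq_eq_norm_toParam_sq (d : ℕ) (ω : ℝ × EuclideanSpace ℝ (Fin d) × ℝ) :
    omegaNormSq d ω = ‖toParam ω‖ ^ 2 :=
  (norm_toParam_sq ω).symm

lemma gradOmegaInner_eq_inner_neuronGrad (d : ℕ) (σ : ℝ → ℝ) (z z' : EuclideanSpace ℝ (Fin d))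
    (ω : ℝ × EuclideanSpace ℝ (Fin d) × ℝ) :
    gradOmegaInner d σ z z' ω =
      ⟪neuronGrad σ (withBias z) (toParam ω), neuronGrad σ (withBias z') (toParam ω)⟫ := by
  simp only [gradOmegaInner, neuronGrad, toParam, withBias, WithLp.prod_inner_apply,
    WithLp.toLp_fst, WithLp.toLp_snd, WithLp.ofLp_smul, Prod.smul_mk, RCLike.inner_apply,
    ringHom_apply, smul_eq_mul, one_mul, mul_one]
  ring

/-- entrywise perturbation bound for the Gram matrices
`G_{ij} = ∫ ⟨∇_ωh(zᵢ,ω), ∇_ωh(zⱼ,ω)⟩ dτ(ω)` and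
`G⁰_{ij} = ∫ ⟨∇_ωh(zᵢ⁰,ω₀), ∇_ωh(zⱼ⁰,ω₀)⟩ dτ₀(ω₀)`:
`|G_{ij} − G⁰_{ij}| ≤ C (W + δ)` with `C` depending only on `d`, `C1`, `B` and `T`. -/
theorem statement14 (d : ℕ) (hd : 1 ≤ d) (C1 : ℝ) (hC1 : 0 < C1) (B T : ℝ) :
    ∃ C > 0, ∀ σ0 : ℝ → ℝ, ContDiff ℝ 2 σ0 →
      (∀ x : ℝ, |σ0 x| ≤ C1 * max |x| 1) →
      (∀ x : ℝ, |deriv σ0 x| ≤ C1) →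
      (∀ x : ℝ, |deriv (deriv σ0) x| ≤ C1) →
      ∀ τ τ₀ : Measure (ℝ × EuclideanSpace ℝ (Fin d) × ℝ),
      IsProbabilityMeasure τ → IsProbabilityMeasure τ₀ →
      -- fourth moments bounded by T :
      (Integrable (fun ω => omegaNormSq d ω ^ 2) τ ∧ ∫ ω, omegaNormSq d ω ^ 2 ∂τ ≤ T) →
      (Integrable (fun ω => omegaNormSq d ω ^ 2) τ₀ ∧ ∫ ω, omegaNormSq d ω ^ 2 ∂τ₀ ≤ T) →
      -- a coupling π of (τ, τ₀) with (∫ ‖ω − ω₀‖₂² dπ)^{1/2} ≤ W :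
      ∀ W : ℝ,
      ∀ Pi : Measure ((ℝ × EuclideanSpace ℝ (Fin d) × ℝ) × (ℝ × EuclideanSpace ℝ (Fin d) × ℝ)),
      Pi.map Prod.fst = τ → Pi.map Prod.snd = τ₀ →
      Integrable (fun q => omegaNormSq d (q.1 - q.2)) Pi →
      Real.sqrt (∫ q, omegaNormSq d (q.1 - q.2) ∂Pi) ≤ W →
      ∀ (n : ℕ) (z z0 : Fin n → EuclideanSpace ℝ (Fin d)) (δ : ℝ),
      (∀ i, ‖z i‖ ≤ B) → (∀ i, ‖z0 i‖ ≤ B) → (∀ i, ‖z i - z0 i‖ ≤ δ) →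
      ∀ i j : Fin n,
        |(∫ ω, gradOmegaInner d σ0 (z i) (z j) ω ∂τ) -
          (∫ ω, gradOmegaInner d σ0 (z0 i) (z0 j) ω ∂τ₀)| ≤ C * (W + δ) := by
  refine ⟨12 * C1 ^ 2 * (1 + |B|) ^ 3 * (1 + 2 * |T|), by positivity, ?_⟩
  intro σ0 hσ h₀ h₁ h₂ τ τ₀ _ _ hτ hτ₀ W Pi hfst hsnd _ hW n z z0 δ hz hz0 hzz i j
  simp only [omegaNormSq_eq_norm_toParam_sq, gradOmegaInner_eq_inner_neuronGrad, ← pow_mul]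
    at hτ hτ₀ hW ⊢
  exact statement14_general (.of_contDiff_two hσ h₀ h₁ h₂) hτ.1 (hτ.2.trans (le_abs_self T))
    hτ₀.1 (hτ₀.2.trans (le_abs_self T)) hfst hsnd hW ((hz i).trans (le_abs_self B))
    ((hz0 i).trans (le_abs_self B)) (hzz i) ((hz j).trans (le_abs_self B)) (hzz j)

end
end

section
/- Let τ and τ' be Borel probability measures on ℝ^{d+2} with second moments at most T, and let ν = (ν_s)_{s∈[0,1]} and ν' = (ν'_s)_{s∈[0,1]} be families of Borel probability measures on ℝ^{2d+1} with sup_s second moments at most V. Let z and z' be C¹ solutions of the mean-field forward ODEs driven by ν and ν' respectively, with the same initial point x satisfying ‖x‖₂ ≤ 1. Assume KL(τ‖τ') < ∞, that there is a coupling π of (τ, τ') with ∫‖ω−ω'‖₂² dπ ≤ 4·KL(τ‖τ'), and that there is K ≥ 0 such that for each s ∈ [0,1] there is a coupling π_s of (ν_s, ν'_s) with ∫‖θ−θ'‖₂² dπ_s ≤ 4K. Then there exists a constant C > 0, depending only on d, C1, α, V and T, such that ∫ h(z(1),ω) dτ(ω) − ∫ h(z'(1),ω') dτ'(ω') ≤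 C·(√(KL(τ‖τ')) + √K). -/
open MeasureTheory Real Set
open scoped RealInnerProductSpace

noncomputable section

/-- `σ(z, θ) = σ0(⟪w, z⟫ + b) • u` for `θ = (u, w, b) ∈ ℝ^d × ℝ^d × ℝ ≅ ℝ^{2d+1}`. -/
def sigmaV (d : ℕ) (σ0 : ℝ → ℝ) (z : EuclideanSpace ℝ (Fin d))
    (θ : EuclideanSpace ℝ (Fin d) × EuclideanSpace ℝ (Fin d) × ℝ) : EuclideanSpace ℝ (Fin d) :=
  σ0 (⟪θ.2.1, z⟫ + θ.2.2) • θ.1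

/-- `‖θ‖₂² = ‖u‖₂² + ‖w‖₂² + b²` for `θ = (u, w, b)`. -/
def thetaNormSq (d : ℕ) (θ : EuclideanSpace ℝ (Fin d) × EuclideanSpace ℝ (Fin d) × ℝ) : ℝ :=
  ‖θ.1‖ ^ 2 + ‖θ.2.1‖ ^ 2 + θ.2.2 ^ 2

/-- The Kullback–Leibler divergence `KL(μ‖λ) = ∫ log(dμ/dλ) dμ` (as a real number). -/
def klReal {X : Type*} [MeasurableSpace X] (μ lam : Measure X) : ℝ :=
  ∫ x, Real.log ((μ.rnDeriv lam x).toReal) ∂μ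

/-!
A coupling of two parameter laws bounds the difference of the corresponding mean-field averages by
the coupling average of `‖neuron σ z θ - neuron σ z' θ'‖`. Since `σ` is Lipschitz, this is at most a
multiple of `‖z - z'‖ |θ|² + (‖z'‖ + 1) |θ - θ'| (|θ| + |θ'| + 1)`, and Cauchy–Schwarz turns the
second term into the square root of the transport cost. Inserted into Grönwall's inequality this
controls the distance of the two flows at time `1`; applied once more to the output layer it
controls the difference of the outputs.
-/

open scoped NNReal

section Gronwall

variable {E : Type*} [NormedAddCommGroup E] [NormedSpace ℝ E]

lemma gronwallBound_le_add_mul_mul_exp {K ε : ℝ} (hK : 0 ≤ K) (hε : 0 ≤ ε) (δ x : ℝ) :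
    gronwallBound δ K ε x ≤ (δ + ε * x) * exp (K * x) := by
  rcases hK.eq_or_lt with rfl | hK
  · simp [gronwallBound_K0]
  have exp_sub_one_le : exp (K * x) - 1 ≤ K * x * exp (K * x) := by
    have := mul_le_mul_of_nonneg_right (one_sub_le_exp_neg (K * x)) (exp_pos (K * x)).le
    rw [← exp_add, neg_add_cancel, exp_zero] at this
    linarith
  rw [gronwallBound_of_K_ne_0 hK.ne']
  calc δ * exp (K * x) + ε / K * (exp (K * x) - 1)
      ≤ δ * exp (K * x) + ε / K * (K * x * exp (K * x)) := by gcongr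
    _ = (δ + ε * x) * exp (K * x) := by field_simp

lemma norm_le_add_mul_mul_exp_of_norm_deriv_le {f f' : ℝ → E} {a b K ε : ℝ} (hK : 0 ≤ K)
    (hε : 0 ≤ ε) (hf : ∀ s ∈ Icc a b, HasDerivWithinAt f (f' s) (Icc a b) s)
    (hbound : ∀ s ∈ Icc a b, ‖f' s‖ ≤ K * ‖f s‖ + ε) {s : ℝ} (hs : s ∈ Icc a b) :
    ‖f s‖ ≤ (‖f a‖ + ε * (b - a)) * exp (K * (b - a)) :=
  calc ‖f s‖ ≤ gronwallBound ‖f a‖ K ε (s - a) :=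
        norm_le_gronwallBound_of_norm_deriv_right_le
          (fun t ht => (hf t ht).continuousWithinAt)
          (fun t ht => (hf t (Ico_subset_Icc_self ht)).mono_of_mem_nhdsWithin
            (Icc_mem_nhdsGE_of_mem ht))
          le_rfl (fun t ht => hbound t (Ico_subset_Icc_self ht)) s hs
    _ ≤ gronwallBound ‖f a‖ K ε (b - a) :=
        gronwallBound_mono (norm_nonneg _) hε hK (sub_le_sub_right hs.2 a)
    _ ≤ (‖f a‖ + ε * (b - a)) * exp (K * (b - a)) :=
        gronwallBound_le_add_mul_mul_exp hK hε _ _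

end Gronwall

section CauchySchwarz

variable {Ω : Type*} [MeasurableSpace Ω] {μ : Measure Ω} {f g h : Ω → ℝ}

lemma memLp_two_sqrt (hf₀ : 0 ≤ f) (hf : Integrable f μ) : MemLp (fun ω => √(f ω)) 2 μ := by
  rw [memLp_two_iff_integrable_sq (continuous_sqrt.comp_aestronglyMeasurable hf.1)]
  simpa only [sq_sqrt (hf₀ _)] using hf

lemma integrable_sqrt_mul_sqrt (hf₀ : 0 ≤ f) (hg₀ : 0 ≤ g) (hf : Integrable f μ)
    (hg : Integrable g μ) : Integrable (fun ω => √(f ω) * √(g ω)) μ :=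
  (memLp_two_sqrt hf₀ hf).integrable_mul (memLp_two_sqrt hg₀ hg)

lemma integral_sqrt_mul_sqrt_le (hf₀ : 0 ≤ f) (hg₀ : 0 ≤ g) (hf : Integrable f μ)
    (hg : Integrable g μ) :
    ∫ ω, √(f ω) * √(g ω) ∂μ ≤ √(∫ ω, f ω ∂μ) * √(∫ ω, g ω ∂μ) := by
  have two_eq : ENNReal.ofReal 2 = 2 := by norm_num
  have holder := integral_mul_le_Lp_mul_Lq_of_nonneg (μ := μ) Real.HolderConjugate.two_two
    (.of_forall fun ω => sqrt_nonneg (f ω)) (.of_forall fun ω => sqrt_nonneg (g ω))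
    (two_eq ▸ memLp_two_sqrt hf₀ hf) (two_eq ▸ memLp_two_sqrt hg₀ hg)
  simpa only [rpow_two, sq_sqrt (hf₀ _), sq_sqrt (hg₀ _), ← sqrt_eq_rpow] using holder

variable [IsProbabilityMeasure μ]

lemma integrable_sqrt (hf₀ : 0 ≤ f) (hf : Integrable f μ) : Integrable (fun ω => √(f ω)) μ :=
  (memLp_two_sqrt hf₀ hf).integrable one_le_two

lemma integral_sqrt_le_sqrt_integral (hf₀ : 0 ≤ f) (hf : Integrable f μ) :
    ∫ ω, √(f ω) ∂μ ≤ √(∫ ω, f ω ∂μ) := by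
  simpa using integral_sqrt_mul_sqrt_le hf₀ zero_le_one hf (integrable_const (1 : ℝ))

lemma integrable_sqrt_mul_sqrt_add_sqrt_add_one (hf₀ : 0 ≤ f) (hg₀ : 0 ≤ g) (hh₀ : 0 ≤ h)
    (hf : Integrable f μ) (hg : Integrable g μ) (hh : Integrable h μ) :
    Integrable (fun ω => √(f ω) * (√(g ω) + √(h ω) + 1)) μ := by
  simp only [mul_add, mul_one]
  exact ((integrable_sqrt_mul_sqrt hf₀ hg₀ hf hg).add
    (integrable_sqrt_mul_sqrt hf₀ hh₀ hf hh)).add (integrable_sqrt hf₀ hf)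

lemma integral_sqrt_mul_sqrt_add_sqrt_add_one_le (hf₀ : 0 ≤ f) (hg₀ : 0 ≤ g) (hh₀ : 0 ≤ h)
    (hf : Integrable f μ) (hg : Integrable g μ) (hh : Integrable h μ) :
    ∫ ω, √(f ω) * (√(g ω) + √(h ω) + 1) ∂μ ≤
      √(∫ ω, f ω ∂μ) * (√(∫ ω, g ω ∂μ) + √(∫ ω, h ω ∂μ) + 1) := by
  have hfg := integrable_sqrt_mul_sqrt hf₀ hg₀ hf hg
  have hfh := integrable_sqrt_mul_sqrt hf₀ hh₀ hf hh
  simp only [mul_add, mul_one]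
  rw [integral_add (by exact hfg.add hfh) (integrable_sqrt hf₀ hf), integral_add hfg hfh]
  exact add_le_add_three (integral_sqrt_mul_sqrt_le hf₀ hg₀ hf hg)
    (integral_sqrt_mul_sqrt_le hf₀ hh₀ hf hh) (integral_sqrt_le_sqrt_integral hf₀ hf)

end CauchySchwarz

lemma norm_integral_sub_integral_le_of_measurePreserving {Ω X Y G : Type*} [MeasurableSpace Ω]
    [MeasurableSpace X] [MeasurableSpace Y] [NormedAddCommGroup G] [NormedSpace ℝ G]
    {P : Measure Ω} {μ : Measure X} {ν : Measure Y} {p : Ω → X} {q : Ω → Y}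
    (hp : MeasurePreserving p P μ) (hq : MeasurePreserving q P ν) {f : X → G} {g : Y → G}
    (hf : Integrable f μ) (hg : Integrable g ν) :
    ‖∫ x, f x ∂μ - ∫ y, g y ∂ν‖ ≤ ∫ ω, ‖f (p ω) - g (q ω)‖ ∂P := by
  rw [← hp.hasLaw.integral_comp hf.1, ← hq.hasLaw.integral_comp hg.1,
    ← integral_sub (hp.integrable_comp_of_integrable hf) (hq.integrable_comp_of_integrable hg)]
  exact norm_integral_le_integral_norm _

section ParameterLaw

variable {E F : Type*} [NormedAddCommGroup E] [NormedAddCommGroup F]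

/-- The squared Euclidean norm `‖u‖² + ‖w‖² + b²` of a neuron parameter `θ = (u, w, b)`. The norm of
the product type `F × E × ℝ` is the sup norm, so it cannot be used here. -/
def sqNorm (θ : F × E × ℝ) : ℝ :=
  ‖θ.1‖ ^ 2 + ‖θ.2.1‖ ^ 2 + θ.2.2 ^ 2

lemma sqNorm_nonneg (θ : F × E × ℝ) : 0 ≤ sqNorm θ := by
  unfold sqNorm
  positivity

lemma sqNorm_zero : sqNorm (0 : F × E × ℝ) = 0 := by
  simp [sqNorm]

lemma norm_fst_le_sqrt_sqNorm (θ : F × E × ℝ) : ‖θ.1‖ ≤ √(sqNorm θ) :=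
  le_sqrt_of_sq_le (by unfold sqNorm; linarith [sq_nonneg ‖θ.2.1‖, sq_nonneg θ.2.2])

lemma norm_snd_fst_le_sqrt_sqNorm (θ : F × E × ℝ) : ‖θ.2.1‖ ≤ √(sqNorm θ) :=
  le_sqrt_of_sq_le (by unfold sqNorm; linarith [sq_nonneg ‖θ.1‖, sq_nonneg θ.2.2])

lemma abs_snd_snd_le_sqrt_sqNorm (θ : F × E × ℝ) : |θ.2.2| ≤ √(sqNorm θ) :=
  abs_le_sqrt (by unfold sqNorm; linarith [sq_nonneg ‖θ.1‖, sq_nonneg ‖θ.2.1‖])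

lemma omegaNormSq_eq_sqNorm (d : ℕ) : omegaNormSq d = sqNorm := by
  ext ω
  simp [omegaNormSq, sqNorm]

variable [MeasurableSpace E] [MeasurableSpace F]

/-- The second moment of the parameter law `μ` is finite and at most `V`. -/
structure SecondMomentLE (μ : Measure (F × E × ℝ)) (V : ℝ) : Prop where
  integrable : Integrable sqNorm μ
  integral_le : ∫ θ, sqNorm θ ∂μ ≤ V

lemma SecondMomentLE.nonneg {μ : Measure (F × E × ℝ)} {V : ℝ} (hμ : SecondMomentLE μ V) : 0 ≤ V :=
  (integral_nonneg sqNorm_nonneg).trans hμ.integral_le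

/-- `P` is a coupling of `μ` and `μ'` whose quadratic transport cost is finite and at most `c`. -/
structure IsCouplingWithCostLE (P : Measure ((F × E × ℝ) × (F × E × ℝ)))
    (μ μ' : Measure (F × E × ℝ)) (c : ℝ) : Prop where
  fst : MeasurePreserving Prod.fst P μ
  snd : MeasurePreserving Prod.snd P μ'
  integrable : Integrable (fun q => sqNorm (q.1 - q.2)) P
  integral_le : ∫ q, sqNorm (q.1 - q.2) ∂P ≤ c

lemma SecondMomentLE.integrable_sqNorm_add_sqrt {μ : Measure (F × E × ℝ)}
    [IsProbabilityMeasure μ] {V : ℝ} (hμ : SecondMomentLE μ V) :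
    Integrable (fun θ => sqNorm θ + √(sqNorm θ)) μ :=
  hμ.integrable.add (integrable_sqrt sqNorm_nonneg hμ.integrable)

namespace IsCouplingWithCostLE

variable {P : Measure ((F × E × ℝ) × (F × E × ℝ))} {μ μ' : Measure (F × E × ℝ)} {V c : ℝ}

lemma integrable_sqNorm_fst (hP : IsCouplingWithCostLE P μ μ' c) (hμ : SecondMomentLE μ V) :
    Integrable (fun q => sqNorm q.1) P :=
  hP.fst.integrable_comp_of_integrable hμ.integrable

lemma integrable_sqNorm_snd (hP : IsCouplingWithCostLE P μ μ' c) (hμ' : SecondMomentLE μ' V) :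
    Integrable (fun q => sqNorm q.2) P :=
  hP.snd.integrable_comp_of_integrable hμ'.integrable

lemma integral_sqNorm_fst_le (hP : IsCouplingWithCostLE P μ μ' c) (hμ : SecondMomentLE μ V) :
    ∫ q, sqNorm q.1 ∂P ≤ V :=
  (hP.fst.hasLaw.integral_comp hμ.integrable.1).trans_le hμ.integral_le

lemma integral_sqNorm_snd_le (hP : IsCouplingWithCostLE P μ μ' c) (hμ' : SecondMomentLE μ' V) :
    ∫ q, sqNorm q.2 ∂P ≤ V :=
  (hP.snd.hasLaw.integral_comp hμ'.integrable.1).trans_le hμ'.integral_le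

variable [IsProbabilityMeasure μ]

lemma integrable_sqrt_cost_mul (hP : IsCouplingWithCostLE P μ μ' c) (hμ : SecondMomentLE μ V)
    (hμ' : SecondMomentLE μ' V) :
    Integrable (fun q => √(sqNorm (q.1 - q.2)) * (√(sqNorm q.1) + √(sqNorm q.2) + 1)) P := by
  have : IsProbabilityMeasure P := hP.fst.hasLaw.isProbabilityMeasure
  exact integrable_sqrt_mul_sqrt_add_sqrt_add_one (fun _ => sqNorm_nonneg _)
    (fun _ => sqNorm_nonneg _) (fun _ => sqNorm_nonneg _) hP.integrable
    (hP.integrable_sqNorm_fst hμ) (hP.integrable_sqNorm_snd hμ')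

lemma integral_sqrt_cost_mul_le (hP : IsCouplingWithCostLE P μ μ' c) (hμ : SecondMomentLE μ V)
    (hμ' : SecondMomentLE μ' V) :
    ∫ q, √(sqNorm (q.1 - q.2)) * (√(sqNorm q.1) + √(sqNorm q.2) + 1) ∂P ≤
      √c * (√V + √V + 1) := by
  have : IsProbabilityMeasure P := hP.fst.hasLaw.isProbabilityMeasure
  grw [integral_sqrt_mul_sqrt_add_sqrt_add_one_le (fun _ => sqNorm_nonneg _)
    (fun _ => sqNorm_nonneg _) (fun _ => sqNorm_nonneg _) hP.integrable
    (hP.integrable_sqNorm_fst hμ) (hP.integrable_sqNorm_snd hμ'), hP.integral_le,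
    hP.integral_sqNorm_fst_le hμ, hP.integral_sqNorm_snd_le hμ']

end IsCouplingWithCostLE

end ParameterLaw

section Neuron

variable {E F : Type*} [NormedAddCommGroup E] [InnerProductSpace ℝ E] [NormedAddCommGroup F]
  {σ : ℝ → ℝ} {L : ℝ≥0}

lemma abs_inner_add_sub_inner_add_le (w w' z z' : E) (b b' : ℝ) :
    |(⟪w, z⟫ + b) - (⟪w', z'⟫ + b')| ≤ ‖w‖ * ‖z - z'‖ + (‖w - w'‖ * ‖z'‖ + |b - b'|) := by
  have split : (⟪w, z⟫ + b) - (⟪w', z'⟫ + b') = ⟪w, z - z'⟫ + (⟪w - w', z'⟫ + (b - b')) := by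
    rw [inner_sub_right, inner_sub_left]
    ring
  rw [split]
  refine (abs_add_le _ _).trans (add_le_add (abs_real_inner_le_norm _ _) ?_)
  exact (abs_add_le _ _).trans (add_le_add_left (abs_real_inner_le_norm _ _) _)

lemma abs_activation_sub_le (hσ : LipschitzWith L σ) (z z' : E) (θ θ' : F × E × ℝ) :
    |σ (⟪θ.2.1, z⟫ + θ.2.2) - σ (⟪θ'.2.1, z'⟫ + θ'.2.2)| ≤
      L * (√(sqNorm θ) * ‖z - z'‖ + √(sqNorm (θ - θ')) * (‖z'‖ + 1)) := by
  refine (hσ.norm_sub_le _ _).trans (mul_le_mul_of_nonneg_left ?_ L.2)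
  rw [mul_add_one]
  refine (abs_inner_add_sub_inner_add_le _ _ _ _ _ _).trans ?_
  gcongr
  · exact norm_snd_fst_le_sqrt_sqNorm θ
  · exact norm_snd_fst_le_sqrt_sqNorm (θ - θ')
  · exact abs_snd_snd_le_sqrt_sqNorm (θ - θ')

lemma abs_activation_le (hσ : LipschitzWith L σ) (hσ₀ : |σ 0| ≤ L) (z : E) (θ : F × E × ℝ) :
    |σ (⟪θ.2.1, z⟫ + θ.2.2)| ≤ L * ((‖z‖ + 1) * (√(sqNorm θ) + 1)) := by
  have lipschitz := abs_activation_sub_le hσ z z θ 0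
  simp only [sub_self, norm_zero, mul_zero, zero_add, sub_zero, Prod.snd_zero, Prod.fst_zero,
    inner_zero_left, add_zero] at lipschitz
  calc |σ (⟪θ.2.1, z⟫ + θ.2.2)| ≤ |σ (⟪θ.2.1, z⟫ + θ.2.2) - σ 0| + |σ 0| := by
        simpa using abs_add_le (σ (⟪θ.2.1, z⟫ + θ.2.2) - σ 0) (σ 0)
    _ ≤ L * (√(sqNorm θ) * (‖z‖ + 1)) + L * 1 :=
        add_le_add lipschitz (hσ₀.trans_eq (mul_one _).symm)
    _ ≤ L * ((‖z‖ + 1) * (√(sqNorm θ) + 1)) := by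
        rw [← mul_add]
        gcongr
        linarith [norm_nonneg z]

variable [NormedSpace ℝ F]

/-- The output `σ(⟪w, z⟫ + b) • u` of a neuron with parameter `θ = (u, w, b)` on the input `z`. For
`F = E` it is the layer map `σ(z, θ)`, for `F = ℝ` the output map `h(z, ω)`. -/
def neuron (σ : ℝ → ℝ) (z : E) (θ : F × E × ℝ) : F :=
  σ (⟪θ.2.1, z⟫ + θ.2.2) • θ.1

lemma neuron_zero (z : E) : neuron σ z (0 : F × E × ℝ) = 0 := by
  simp [neuron]

lemma norm_neuron_sub_neuron_le (hσ : LipschitzWith L σ) (hσ₀ : |σ 0| ≤ L) (z z' : E)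
    (θ θ' : F × E × ℝ) :
    ‖neuron σ z θ - neuron σ z' θ'‖ ≤ L * (‖z - z'‖ * sqNorm θ +
      (‖z'‖ + 1) * (√(sqNorm (θ - θ')) * (√(sqNorm θ) + √(sqNorm θ') + 1))) := by
  set N := √(sqNorm θ)
  set N' := √(sqNorm θ')
  set D := √(sqNorm (θ - θ'))
  have split : neuron σ z θ - neuron σ z' θ' =
      (σ (⟪θ.2.1, z⟫ + θ.2.2) - σ (⟪θ'.2.1, z'⟫ + θ'.2.2)) • θ.1 +
        σ (⟪θ'.2.1, z'⟫ + θ'.2.2) • (θ - θ').1 := by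
    simp only [neuron, Prod.fst_sub]
    module
  calc ‖neuron σ z θ - neuron σ z' θ'‖
      ≤ L * (N * ‖z - z'‖ + D * (‖z'‖ + 1)) * N + L * ((‖z'‖ + 1) * (N' + 1)) * D := by
        rw [split]
        refine (norm_add_le _ _).trans ?_
        rw [norm_smul, norm_smul, norm_eq_abs, norm_eq_abs]
        gcongr
        · exact abs_activation_sub_le hσ z z' θ θ'
        · exact norm_fst_le_sqrt_sqNorm θ
        · exact abs_activation_le hσ hσ₀ z' θ'
        · exact norm_fst_le_sqrt_sqNorm (θ - θ')
    _ = L * (‖z - z'‖ * N ^ 2 + (‖z'‖ + 1) * (D * (N + N' + 1))) := by ring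
    _ = _ := by rw [sq_sqrt (sqNorm_nonneg θ)]

lemma norm_neuron_le (hσ : LipschitzWith L σ) (hσ₀ : |σ 0| ≤ L) (z : E) (θ : F × E × ℝ) :
    ‖neuron σ z θ‖ ≤ L * (‖z‖ + 1) * (sqNorm θ + √(sqNorm θ)) := by
  have h := norm_neuron_sub_neuron_le hσ hσ₀ z z θ 0
  rw [neuron_zero, sqNorm_zero, sub_zero, sub_zero, sub_self, norm_zero, sqrt_zero] at h
  calc ‖neuron σ z θ‖ ≤ _ := h
    _ = L * (‖z‖ + 1) * (√(sqNorm θ) ^ 2 + √(sqNorm θ)) := by ring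
    _ = _ := by rw [sq_sqrt (sqNorm_nonneg θ)]

variable [MeasurableSpace E] [MeasurableSpace F] {μ μ' : Measure (F × E × ℝ)}
  [IsProbabilityMeasure μ] {V c : ℝ}

lemma norm_integral_neuron_le (hσ : LipschitzWith L σ) (hσ₀ : |σ 0| ≤ L)
    (hμ : SecondMomentLE μ V) (z : E) :
    ‖∫ θ, neuron σ z θ ∂μ‖ ≤ L * (‖z‖ + 1) * (V + √V) := by
  refine (norm_integral_le_of_norm_le (hμ.integrable_sqNorm_add_sqrt.const_mul _)
    (.of_forall (norm_neuron_le hσ hσ₀ z))).trans ?_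
  rw [integral_const_mul,
    integral_add hμ.integrable (integrable_sqrt sqNorm_nonneg hμ.integrable)]
  gcongr
  · exact hμ.integral_le
  · exact (integral_sqrt_le_sqrt_integral sqNorm_nonneg hμ.integrable).trans
      (sqrt_le_sqrt hμ.integral_le)

variable [BorelSpace E] [SecondCountableTopology E] [BorelSpace F] [SecondCountableTopology F]

lemma integrable_neuron (hσ : LipschitzWith L σ) (hσ₀ : |σ 0| ≤ L) (hμ : SecondMomentLE μ V)
    (z : E) : Integrable (neuron σ z) μ := by
  have continuous_neuron : Continuous (neuron σ z : F × E × ℝ → F) := by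
    have := hσ.continuous
    unfold neuron
    fun_prop
  exact (hμ.integrable_sqNorm_add_sqrt.const_mul _).mono' continuous_neuron.aestronglyMeasurable
    (.of_forall (norm_neuron_le hσ hσ₀ z))

lemma norm_integral_neuron_sub_le [IsProbabilityMeasure μ'] (hσ : LipschitzWith L σ)
    (hσ₀ : |σ 0| ≤ L) (hμ : SecondMomentLE μ V) (hμ' : SecondMomentLE μ' V)
    {P : Measure ((F × E × ℝ) × (F × E × ℝ))} (hP : IsCouplingWithCostLE P μ μ' c) (z z' : E) :
    ‖∫ θ, neuron σ z θ ∂μ - ∫ θ, neuron σ z' θ ∂μ'‖ ≤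
      L * (V * ‖z - z'‖ + (‖z'‖ + 1) * (2 * √V + 1) * √c) := by
  have moment := hP.integrable_sqNorm_fst hμ
  have cross := hP.integrable_sqrt_cost_mul hμ hμ'
  have hneuron := integrable_neuron hσ hσ₀ hμ z
  have hneuron' := integrable_neuron hσ hσ₀ hμ' z'
  calc ‖∫ θ, neuron σ z θ ∂μ - ∫ θ, neuron σ z' θ ∂μ'‖
      ≤ ∫ q, ‖neuron σ z q.1 - neuron σ z' q.2‖ ∂P :=
        norm_integral_sub_integral_le_of_measurePreserving hP.fst hP.snd hneuron hneuron'
    _ ≤ ∫ q, L * (‖z - z'‖ * sqNorm q.1 + (‖z'‖ + 1) * (√(sqNorm (q.1 - q.2)) *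
          (√(sqNorm q.1) + √(sqNorm q.2) + 1))) ∂P :=
        integral_mono
          ((hP.fst.integrable_comp_of_integrable hneuron).sub
            (hP.snd.integrable_comp_of_integrable hneuron')).norm
          (((moment.const_mul _).add (cross.const_mul _)).const_mul _)
          fun q => norm_neuron_sub_neuron_le hσ hσ₀ z z' q.1 q.2
    _ = L * (‖z - z'‖ * ∫ q, sqNorm q.1 ∂P + (‖z'‖ + 1) * ∫ q, √(sqNorm (q.1 - q.2)) *
          (√(sqNorm q.1) + √(sqNorm q.2) + 1) ∂P) := by
        rw [integral_const_mul, integral_add (moment.const_mul _) (cross.const_mul _),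
          integral_const_mul, integral_const_mul]
    _ ≤ L * (‖z - z'‖ * V + (‖z'‖ + 1) * (√c * (√V + √V + 1))) := by
        grw [hP.integral_sqNorm_fst_le hμ, hP.integral_sqrt_cost_mul_le hμ hμ']
    _ = _ := by ring

end Neuron

section Flow

variable {E : Type*} [NormedAddCommGroup E] [InnerProductSpace ℝ E] [MeasurableSpace E]

/-- `z` solves the mean-field forward ODE `z' = α ∫ neuron σ z θ dν_s(θ)` on `[0, 1]`. -/
def IsMeanFieldFlow (α : ℝ) (σ : ℝ → ℝ) (ν : ℝ → Measure (E × E × ℝ)) (z : ℝ → E) : Prop :=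
  ∀ s ∈ Icc (0 : ℝ) 1, HasDerivWithinAt z (α • ∫ θ, neuron σ (z s) θ ∂ν s) (Icc 0 1) s

/-- A bound for the norm on `[0, 1]` of a mean-field flow that starts in the ball of radius `r`,
for a parameter law with second moments at most `V` and an `L`-Lipschitz activation. -/
def flowRadius (L α V r : ℝ) : ℝ :=
  (r + |α| * L * (V + √V)) * exp (|α| * L * (V + √V))

variable {σ : ℝ → ℝ} {L : ℝ≥0} {α V r c : ℝ}
  {ν ν' : ℝ → Measure (E × E × ℝ)} [∀ s, IsProbabilityMeasure (ν s)] {z z' : ℝ → E}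

lemma IsMeanFieldFlow.norm_le_flowRadius (hz : IsMeanFieldFlow α σ ν z)
    (hσ : LipschitzWith L σ) (hσ₀ : |σ 0| ≤ L)
    (hν : ∀ s ∈ Icc (0 : ℝ) 1, SecondMomentLE (ν s) V) (hz₀ : ‖z 0‖ ≤ r) {s : ℝ}
    (hs : s ∈ Icc (0 : ℝ) 1) : ‖z s‖ ≤ flowRadius L α V r := by
  have hV : 0 ≤ V := (hν s hs).nonneg
  have growth : ∀ t ∈ Icc (0 : ℝ) 1, ‖α • ∫ θ, neuron σ (z t) θ ∂ν t‖ ≤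
      |α| * L * (V + √V) * ‖z t‖ + |α| * L * (V + √V) := fun t ht =>
    calc ‖α • ∫ θ, neuron σ (z t) θ ∂ν t‖ ≤ |α| * (L * (‖z t‖ + 1) * (V + √V)) := by
          rw [norm_smul, norm_eq_abs]
          grw [norm_integral_neuron_le hσ hσ₀ (hν t ht)]
      _ = _ := by ring
  have gronwall := norm_le_add_mul_mul_exp_of_norm_deriv_le (by positivity) (by positivity) hz
    growth hs
  simp only [sub_zero, mul_one] at gronwall
  refine gronwall.trans ?_
  unfold flowRadius
  gcongr

lemma IsMeanFieldFlow.norm_sub_le [BorelSpace E] [SecondCountableTopology E]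
    [∀ s, IsProbabilityMeasure (ν' s)]
    (hz : IsMeanFieldFlow α σ ν z) (hz' : IsMeanFieldFlow α σ ν' z')
    (hσ : LipschitzWith L σ) (hσ₀ : |σ 0| ≤ L)
    (hν : ∀ s ∈ Icc (0 : ℝ) 1, SecondMomentLE (ν s) V)
    (hν' : ∀ s ∈ Icc (0 : ℝ) 1, SecondMomentLE (ν' s) V)
    {P : ℝ → Measure ((E × E × ℝ) × (E × E × ℝ))}
    (hP : ∀ s ∈ Icc (0 : ℝ) 1, IsCouplingWithCostLE (P s) (ν s) (ν' s) c)
    (hz₀ : ‖z' 0‖ ≤ r) {s : ℝ} (hs : s ∈ Icc (0 : ℝ) 1) :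
    ‖z s - z' s‖ ≤ (‖z 0 - z' 0‖ + |α| * L * (flowRadius L α V r + 1) * (2 * √V + 1) * √c) *
      exp (|α| * L * V) := by
  have hV : 0 ≤ V := (hν s hs).nonneg
  have radius_bound : ∀ t ∈ Icc (0 : ℝ) 1, ‖z' t‖ ≤ flowRadius L α V r := fun t ht =>
    hz'.norm_le_flowRadius hσ hσ₀ hν' hz₀ ht
  have radius_nonneg : 0 ≤ flowRadius L α V r := (norm_nonneg _).trans (radius_bound s hs)
  have growth : ∀ t ∈ Icc (0 : ℝ) 1,
      ‖α • ∫ θ, neuron σ (z t) θ ∂ν t - α • ∫ θ, neuron σ (z' t) θ ∂ν' t‖ ≤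
        |α| * L * V * ‖z t - z' t‖ +
          |α| * L * (flowRadius L α V r + 1) * (2 * √V + 1) * √c := fun t ht =>
    calc ‖α • ∫ θ, neuron σ (z t) θ ∂ν t - α • ∫ θ, neuron σ (z' t) θ ∂ν' t‖
        ≤ |α| * (L * (V * ‖z t - z' t‖ +
            (flowRadius L α V r + 1) * (2 * √V + 1) * √c)) := by
          rw [← smul_sub, norm_smul, norm_eq_abs]
          grw [norm_integral_neuron_sub_le hσ hσ₀ (hν t ht) (hν' t ht) (hP t ht),
            radius_bound t ht]
      _ = _ := by ring
  simpa only [sub_zero, mul_one] using norm_le_add_mul_mul_exp_of_norm_deriv_le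
    (f := fun t => z t - z' t) (by positivity) (by positivity)
    (fun t ht => (hz t ht).sub (hz' t ht)) growth hs

end Flow

theorem statement15_general {E F : Type*} [NormedAddCommGroup E] [InnerProductSpace ℝ E]
    [CompleteSpace E] [MeasurableSpace E] [BorelSpace E] [SecondCountableTopology E]
    [NormedAddCommGroup F] [NormedSpace ℝ F] [CompleteSpace F] [MeasurableSpace F] [BorelSpace F]
    [SecondCountableTopology F] (L : ℝ≥0) (α V T r : ℝ) :
    ∃ C > 0, ∀ σ : ℝ → ℝ, LipschitzWith L σ → |σ 0| ≤ L →
      ∀ τ τ' : Measure (F × E × ℝ), IsProbabilityMeasure τ → IsProbabilityMeasure τ' →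
      SecondMomentLE τ T → SecondMomentLE τ' T →
      ∀ ν ν' : ℝ → Measure (E × E × ℝ),
      (∀ s, IsProbabilityMeasure (ν s)) → (∀ s, IsProbabilityMeasure (ν' s)) →
      (∀ s ∈ Icc (0 : ℝ) 1, SecondMomentLE (ν s) V) →
      (∀ s ∈ Icc (0 : ℝ) 1, SecondMomentLE (ν' s) V) →
      ∀ z z' : ℝ → E, z 0 = z' 0 → ‖z' 0‖ ≤ r →
      IsMeanFieldFlow α σ ν z → IsMeanFieldFlow α σ ν' z' →
      ∀ (P : Measure ((F × E × ℝ) × (F × E × ℝ))) (κ : ℝ), IsCouplingWithCostLE P τ τ' κ →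
      ∀ (Q : ℝ → Measure ((E × E × ℝ) × (E × E × ℝ))) (K : ℝ),
      (∀ s ∈ Icc (0 : ℝ) 1, IsCouplingWithCostLE (Q s) (ν s) (ν' s) K) →
      ‖∫ ω, neuron σ (z 1) ω ∂τ - ∫ ω, neuron σ (z' 1) ω ∂τ'‖ ≤ C * (√κ + √K) := by
  set R := flowRadius L α V r
  set flowConst := |α| * L * (R + 1) * (2 * √V + 1) * exp (|α| * L * V)
  refine ⟨max 1 (max (L * ((R + 1) * (2 * √T + 1))) (L * (T * flowConst))), by positivity, ?_⟩
  intro σ hσ hσ₀ τ τ' _ _ hτ hτ' ν ν' _ _ hν hν' z z' hz₀ hr hz hz' P κ hP Q K hQ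
  have hT : 0 ≤ T := hτ.nonneg
  have one_mem : (1 : ℝ) ∈ Icc (0 : ℝ) 1 := right_mem_Icc.2 zero_le_one
  have radius_bound : ‖z' 1‖ ≤ R := hz'.norm_le_flowRadius hσ hσ₀ hν' hr one_mem
  have flow_bound : ‖z 1 - z' 1‖ ≤ flowConst * √K := by
    refine (hz.norm_sub_le hz' hσ hσ₀ hν hν' hQ hr one_mem).trans_eq ?_
    rw [hz₀, sub_self, norm_zero]
    ring
  calc ‖∫ ω, neuron σ (z 1) ω ∂τ - ∫ ω, neuron σ (z' 1) ω ∂τ'‖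
      ≤ L * (T * (flowConst * √K) + (R + 1) * (2 * √T + 1) * √κ) := by
        grw [norm_integral_neuron_sub_le hσ hσ₀ hτ hτ' hP, flow_bound, radius_bound]
    _ = L * ((R + 1) * (2 * √T + 1)) * √κ + L * (T * flowConst) * √K := by ring
    _ ≤ _ := by
        rw [mul_add (max _ _)]
        gcongr
        · exact (le_max_left _ _).trans (le_max_right _ _)
        · exact (le_max_right _ _).trans (le_max_right _ _)

/-- comparison of the network outputs for two parameter configurations in terms
of `√KL(τ‖τ')` and `√K`, with a constant `C` depending only on `d`, `C1`, `α`, `V` and `T`. -/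
theorem statement15 (d : ℕ) (hd : 1 ≤ d) (C1 : ℝ) (hC1 : 0 < C1)
    (α : ℝ) (hα : 0 < α) (V T : ℝ) :
    ∃ C > 0, ∀ σ0 : ℝ → ℝ, ContDiff ℝ 2 σ0 →
      (∀ x : ℝ, |σ0 x| ≤ C1 * max |x| 1) →
      (∀ x : ℝ, |deriv σ0 x| ≤ C1) →
      (∀ x : ℝ, |deriv (deriv σ0) x| ≤ C1) →
      ∀ τ τ' : Measure (ℝ × EuclideanSpace ℝ (Fin d) × ℝ),
      IsProbabilityMeasure τ → IsProbabilityMeasure τ' →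
      (Integrable (fun ω => omegaNormSq d ω) τ ∧ ∫ ω, omegaNormSq d ω ∂τ ≤ T) →
      (Integrable (fun ω => omegaNormSq d ω) τ' ∧ ∫ ω, omegaNormSq d ω ∂τ' ≤ T) →
      ∀ ν ν' : ℝ → Measure (EuclideanSpace ℝ (Fin d) × EuclideanSpace ℝ (Fin d) × ℝ),
      (∀ s, IsProbabilityMeasure (ν s)) → (∀ s, IsProbabilityMeasure (ν' s)) →
      (∀ s ∈ Set.Icc (0 : ℝ) 1,
        Integrable (fun θ => thetaNormSq d θ) (ν s) ∧ ∫ θ, thetaNormSq d θ ∂(ν s) ≤ V) →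
      (∀ s ∈ Set.Icc (0 : ℝ) 1,
        Integrable (fun θ => thetaNormSq d θ) (ν' s) ∧ ∫ θ, thetaNormSq d θ ∂(ν' s) ≤ V) →
      ∀ x : EuclideanSpace ℝ (Fin d), ‖x‖ ≤ 1 →
      ∀ z z' : ℝ → EuclideanSpace ℝ (Fin d),
      z 0 = x → z' 0 = x →
      (∀ s ∈ Set.Icc (0 : ℝ) 1, Integrable (sigmaV d σ0 (z s)) (ν s)) →
      (∀ s ∈ Set.Icc (0 : ℝ) 1, Integrable (sigmaV d σ0 (z' s)) (ν' s)) →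
      (∀ s ∈ Set.Icc (0 : ℝ) 1,
        HasDerivWithinAt z (α • ∫ θ, sigmaV d σ0 (z s) θ ∂(ν s)) (Set.Icc (0 : ℝ) 1) s) →
      (∀ s ∈ Set.Icc (0 : ℝ) 1,
        HasDerivWithinAt z' (α • ∫ θ, sigmaV d σ0 (z' s) θ ∂(ν' s)) (Set.Icc (0 : ℝ) 1) s) →
      -- KL(τ‖τ') < ∞ :
      τ ≪ τ' →
      Integrable (fun ω => Real.log ((τ.rnDeriv τ' ω).toReal)) τ →
      -- a coupling π of (τ, τ') with ∫ ‖ω − ω'‖₂² dπ ≤ 4 KL(τ‖τ') :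
      ∀ Pi : Measure ((ℝ × EuclideanSpace ℝ (Fin d) × ℝ) × (ℝ × EuclideanSpace ℝ (Fin d) × ℝ)),
      Pi.map Prod.fst = τ → Pi.map Prod.snd = τ' →
      Integrable (fun q => omegaNormSq d (q.1 - q.2)) Pi →
      (∫ q, omegaNormSq d (q.1 - q.2) ∂Pi) ≤ 4 * klReal τ τ' →
      -- K ≥ 0 and, for each s, a coupling π_s of (ν_s, ν'_s) with ∫ ‖θ − θ'‖₂² dπ_s ≤ 4K :
      ∀ K : ℝ, 0 ≤ K →
      ∀ Pis : ℝ → Measure ((EuclideanSpace ℝ (Fin d) × EuclideanSpace ℝ (Fin d) × ℝ) ×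
                           (EuclideanSpace ℝ (Fin d) × EuclideanSpace ℝ (Fin d) × ℝ)),
      (∀ s ∈ Set.Icc (0 : ℝ) 1,
        (Pis s).map Prod.fst = ν s ∧ (Pis s).map Prod.snd = ν' s ∧
        Integrable (fun q => thetaNormSq d (q.1 - q.2)) (Pis s) ∧
        ∫ q, thetaNormSq d (q.1 - q.2) ∂(Pis s) ≤ 4 * K) →
      (∫ ω, ω.1 * σ0 (⟪ω.2.1, z 1⟫ + ω.2.2) ∂τ) -
          (∫ ω, ω.1 * σ0 (⟪ω.2.1, z' 1⟫ + ω.2.2) ∂τ') ≤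
        C * (Real.sqrt (klReal τ τ') + Real.sqrt K) := by
  lift C1 to ℝ≥0 using hC1.le
  obtain ⟨C, hC, bound⟩ := statement15_general (E := EuclideanSpace ℝ (Fin d)) (F := ℝ) C1 α V T 1
  refine ⟨C * 2, by positivity, ?_⟩
  intro σ hσ hgrowth hderiv _ τ τ' hτ hτ' hτT hτT' ν ν' hν hν' hνV hνV' x hx z z' hz₀ hz₀' _ _
    hz hz' _ _ P hfst hsnd hcost hcost_le K _ Q hQ
  rw [omegaNormSq_eq_sqNorm] at hτT hτT' hcost hcost_le
  have hlip : LipschitzWith C1 σ :=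
    lipschitzWith_of_nnnorm_deriv_le (hσ.differentiable two_ne_zero) hderiv
  have output_bound := bound σ hlip (by simpa using hgrowth 0) τ τ' hτ hτ' ⟨hτT.1, hτT.2⟩
    ⟨hτT'.1, hτT'.2⟩ ν ν' hν hν' (fun s hs => ⟨(hνV s hs).1, (hνV s hs).2⟩)
    (fun s hs => ⟨(hνV' s hs).1, (hνV' s hs).2⟩) z z' (hz₀.trans hz₀'.symm) (hz₀' ▸ hx) hz hz'
    P (4 * klReal τ τ') ⟨⟨measurable_fst, hfst⟩, ⟨measurable_snd, hsnd⟩, hcost, hcost_le⟩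
    Q (4 * K) fun s hs => let ⟨hfst, hsnd, hcost, hcost_le⟩ := hQ s hs
      ⟨⟨measurable_fst, hfst⟩, ⟨measurable_snd, hsnd⟩, hcost, hcost_le⟩
  have sqrt_four : √(4 : ℝ) = 2 := by
    rw [show (4 : ℝ) = 2 ^ 2 by norm_num, sqrt_sq zero_le_two]
  simp only [neuron, smul_eq_mul, mul_comm (σ _), sqrt_mul zero_le_four, sqrt_four, ← mul_add,
    ← mul_assoc] at output_bound
  exact (le_norm_self _).trans output_bound

end
end
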